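/- Let p be a polynomial with complex coefficients of degree n ≥ 2, z₀ ∈ ℂ a seed, and S₀ = {z ∈ ℂ : |p(z)| ≤ |p(z₀)|}. Then the RNM orbit of z₀ remains in S₀; in fact |p(z_{t+1})| ≤ |p(z_t)| for every t ≥ 0, with strict inequality whenever p(z_t) ≠ 0. -/

import Mathlib

open Polynomial Filter Topology
open scoped Classical

noncomputable section

/-- The `j`-th derivative of `p`, evaluated at `z`. -/
def dEval (p : Polynomial ℂ) (j : ℕ) (z : ℂ) : ℂ :=
  (Polynomial.derivative^[j] p).eval z

/-- The index `k(z) = min {j ≥ 1 : p^{(j)}(z) ≠ 0}`. -/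
def kIndex (p : Polynomial ℂ) (z : ℂ) : ℕ :=
  sInf {j : ℕ | 1 ≤ j ∧ dEval p j z ≠ 0}

/-- `A(z) = max {|p^{(j)}(z)|/j! : j = 0, …, n}`, where `n` is the degree of `p`. -/
def Amax (p : Polynomial ℂ) (z : ℂ) : ℝ :=
  (Finset.range (p.natDegree + 1)).sup' Finset.nonempty_range_add_one
    (fun j => ‖dEval p j z‖ / (Nat.factorial j))

/-- `u_m = (1/m!) · p(z) · conj(p^{(m)}(z))`. -/
def uPar (p : Polynomial ℂ) (m : ℕ) (z : ℂ) : ℂ :=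
  (1 / (Nat.factorial m : ℂ)) * p.eval z * (starRingEnd ℂ) (dEval p m z)

/-- `γ = 2 · Re(u_m^(m-1))`. -/
def gammaPar (p : Polynomial ℂ) (m : ℕ) (z : ℂ) : ℝ :=
  2 * ((uPar p m z) ^ (m - 1)).re

/-- `δ = -2 · Im(u_m^(m-1))`. -/
def deltaPar (p : Polynomial ℂ) (m : ℕ) (z : ℂ) : ℝ :=
  -2 * ((uPar p m z) ^ (m - 1)).im

/-- `c_m = max {|γ|, |δ|}`. -/
def cPar (p : Polynomial ℂ) (m : ℕ) (z : ℂ) : ℝ :=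
  max |gammaPar p m z| |deltaPar p m z|

/-- The angle `θ`: `0` if `c = |γ|, γ < 0`; `π/m` if `c = |γ|, γ > 0`;
`π/(2m)` if `c = |δ|, δ < 0`; `3π/(2m)` if `c = |δ|, δ > 0`. -/
def thetaPar (p : Polynomial ℂ) (m : ℕ) (z : ℂ) : ℝ :=
  if cPar p m z = |gammaPar p m z| then
    if gammaPar p m z < 0 then 0 else Real.pi / m
  else
    if deltaPar p m z < 0 then Real.pi / (2 * m) else 3 * Real.pi / (2 * m)

/-- `C_m = c_m · |u_m|^(2-m) / (6 · A(z)²)`. -/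
def CPar (p : Polynomial ℂ) (m : ℕ) (z : ℂ) : ℝ :=
  cPar p m z * ‖uPar p m z‖ ^ ((2 : ℤ) - (m : ℤ)) / (6 * (Amax p z) ^ 2)

/-- The Robust Newton iterate with prescribed index `m`:
`z + (C_m/3) · (u_m/|u_m|) · e^(iθ)`. -/
def rniWith (p : Polynomial ℂ) (m : ℕ) (z : ℂ) : ℂ :=
  z + (↑(CPar p m z / 3) : ℂ) * (uPar p m z / (↑(‖uPar p m z‖) : ℂ)) *
    Complex.exp ((↑(thetaPar p m z) : ℂ) * Complex.I)

/-- The Robust Newton iterate `N̂_p(z)`. -/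
def RN (p : Polynomial ℂ) (z : ℂ) : ℂ := rniWith p (kIndex p z) z

/-- The RNM orbit of the seed `z₀`: `z_{t+1} = N̂_p(z_t)` when `p(z_t) ≠ 0`,
and `z_{t+1} = z_t` when `p(z_t) = 0`. -/
def rnmOrbit (p : Polynomial ℂ) (z₀ : ℂ) : ℕ → ℂ
  | 0 => z₀
  | t + 1 =>
      if p.eval (rnmOrbit p z₀ t) = 0 then rnmOrbit p z₀ t
      else RN p (rnmOrbit p z₀ t)

/-!
Write `aⱼ = p⁽ʲ⁾(z)/j!`, so that `p(z + w) = a₀ + a_k w^k + O(A |w|^(k+1))` and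
`conj a₀ · a_k = conj u_k`. For the Robust Newton displacement `w`, of length `r = C_k/3`,
the angle `θ` rotates `u_k^(k-1)` onto a direction whose real part is `-c_k/2`, and `C_k` is scaled
so that the cross term `2 Re(conj a₀ · a_k w^k)` of `|p(z + w)|²` is exactly `-18 A² r^(k+1)`.
All the other terms together add at most `3 A² r^(k+1)/(1 - r)²` to `|p(z)|²`, which is smaller
because `r ≤ 1/9`.
-/

section PowerExpansion

lemma norm_sum_Ico_mul_pow_le {R : Type*} [SeminormedRing R] [NormOneClass R] {a : ℕ → R} {A : ℝ}
    (ha : ∀ j, ‖a j‖ ≤ A) {w : R} (hw : ‖w‖ < 1) (m n : ℕ) :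
    ‖∑ j ∈ Finset.Ico m n, a j * w ^ j‖ ≤ A * (‖w‖ ^ m / (1 - ‖w‖)) := by
  have hA : 0 ≤ A := (norm_nonneg _).trans (ha 0)
  calc ‖∑ j ∈ Finset.Ico m n, a j * w ^ j‖
      ≤ ∑ j ∈ Finset.Ico m n, A * ‖w‖ ^ j :=
        norm_sum_le_of_le _ fun j _ => (norm_mul_le _ _).trans <|
          mul_le_mul (ha j) (norm_pow_le w j) (norm_nonneg _) hA
    _ = A * ∑ j ∈ Finset.Ico m n, ‖w‖ ^ j := by rw [Finset.mul_sum]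
    _ ≤ A * (‖w‖ ^ m / (1 - ‖w‖)) := by
        gcongr
        exact geom_sum_Ico_le_of_lt_one (norm_nonneg w) hw

lemma eval_eq_coeff_zero_add_sum_Ico {R : Type*} [Semiring R] {f : R[X]} {k n : ℕ} (hk : 0 < k)
    (hgap : ∀ j, 0 < j → j < k → f.coeff j = 0) (hkn : k ≤ n) (hn : f.natDegree < n) (w : R) :
    f.eval w = f.coeff 0 + ∑ j ∈ Finset.Ico k n, f.coeff j * w ^ j := by
  rw [eval_eq_sum_range' hn, ← Finset.sum_range_add_sum_Ico _ hkn,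
    Finset.sum_eq_single_of_mem 0 (Finset.mem_range.2 hk), pow_zero, mul_one]
  intro j hj hj0
  rw [hgap j (Nat.pos_of_ne_zero hj0) (Finset.mem_range.1 hj), zero_mul]

lemma norm_eval_sq_le_of_gap {𝕜 : Type*} [RCLike 𝕜] {f : 𝕜[X]} {k : ℕ} (hk : 0 < k)
    (hgap : ∀ j, 0 < j → j < k → f.coeff j = 0) {A : ℝ} (hA : ∀ j, ‖f.coeff j‖ ≤ A) {w : 𝕜}
    (hw : ‖w‖ < 1) :
    ‖f.eval w‖ ^ 2 ≤ ‖f.coeff 0‖ ^ 2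
      + 2 * RCLike.re ((starRingEnd 𝕜) (f.coeff 0) * (f.coeff k * w ^ k))
      + 3 * A ^ 2 * ‖w‖ ^ (k + 1) / (1 - ‖w‖) ^ 2 := by
  set r := ‖w‖
  set a := f.coeff 0
  set N := max f.natDegree k + 1
  set T := ∑ j ∈ Finset.Ico k N, f.coeff j * w ^ j
  set R := ∑ j ∈ Finset.Ico (k + 1) N, f.coeff j * w ^ j
  have hr : 0 ≤ r := norm_nonneg w
  have h1r : 0 < 1 - r := sub_pos.2 hw
  have heval : f.eval w = a + T :=
    eval_eq_coeff_zero_add_sum_Ico hk hgap (by grind) (by grind) w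
  have hT : T = f.coeff k * w ^ k + R := Finset.sum_eq_sum_Ico_succ_bot (by grind) _
  have hsq : ‖a + T‖ ^ 2 = ‖a‖ ^ 2 + 2 * RCLike.re ((starRingEnd 𝕜) a * T) + ‖T‖ ^ 2 := by
    rw [norm_add_sq (𝕜 := 𝕜), RCLike.inner_apply']
  have hcross : RCLike.re ((starRingEnd 𝕜) a * R) ≤ A ^ 2 * r ^ (k + 1) / (1 - r) ^ 2 := by
    calc RCLike.re ((starRingEnd 𝕜) a * R) ≤ ‖a‖ * ‖R‖ := by
          simpa only [norm_mul, RCLike.norm_conj] using RCLike.re_le_norm ((starRingEnd 𝕜) a * R)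
      _ ≤ A * (A * (r ^ (k + 1) / (1 - r))) :=
          mul_le_mul (hA 0) (norm_sum_Ico_mul_pow_le hA hw _ _) (norm_nonneg _)
            ((norm_nonneg _).trans (hA 0))
      _ = A ^ 2 * r ^ (k + 1) / (1 - r) := by ring
      _ ≤ A ^ 2 * r ^ (k + 1) / (1 - r) ^ 2 := by
          gcongr
          exact pow_le_of_le_one h1r.le (by linarith) two_ne_zero
  have htail : ‖T‖ ^ 2 ≤ A ^ 2 * r ^ (k + 1) / (1 - r) ^ 2 := by
    calc ‖T‖ ^ 2 ≤ (A * (r ^ k / (1 - r))) ^ 2 := by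
          gcongr
          exact norm_sum_Ico_mul_pow_le hA hw _ _
      _ = A ^ 2 * r ^ (k + k) / (1 - r) ^ 2 := by
          rw [mul_pow, div_pow, ← pow_mul, mul_two]
          ring
      _ ≤ A ^ 2 * r ^ (k + 1) / (1 - r) ^ 2 := by
          gcongr A ^ 2 * ?_ / _
          exact pow_le_pow_of_le_one hr hw.le (by lia)
  rw [heval, hsq]
  nth_rewrite 1 [hT]
  rw [mul_add, map_add]
  linear_combination 2 * hcross + htail

end PowerExpansion

section TaylorCoefficients

variable (p : ℂ[X]) (z : ℂ)

lemma taylor_coeff_eq_dEval_div (j : ℕ) :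
    (taylor z p).coeff j = dEval p j z / (j.factorial : ℂ) := by
  rw [taylor_coeff, dEval, ← factorial_smul_hasseDeriv,
    eq_div_iff (Nat.cast_ne_zero.2 j.factorial_ne_zero)]
  simp [mul_comm]

lemma dEval_eq_zero_iff (j : ℕ) : dEval p j z = 0 ↔ (taylor z p).coeff j = 0 := by
  simp [taylor_coeff_eq_dEval_div, j.factorial_ne_zero]

lemma uPar_eq_taylor_coeff_mul (m : ℕ) :
    uPar p m z = (taylor z p).coeff 0 * (starRingEnd ℂ) ((taylor z p).coeff m) := by
  rw [taylor_coeff_zero, taylor_coeff_eq_dEval_div, uPar, map_div₀, map_natCast]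
  ring

lemma norm_taylor_coeff_le_Amax (j : ℕ) : ‖(taylor z p).coeff j‖ ≤ Amax p z := by
  have hle : ∀ i ≤ p.natDegree, ‖(taylor z p).coeff i‖ ≤ Amax p z := fun i hi => by
    rw [taylor_coeff_eq_dEval_div, norm_div, Complex.norm_natCast]
    exact Finset.le_sup' (fun i => ‖dEval p i z‖ / (i.factorial : ℝ))
      (Finset.mem_range_succ_iff.2 hi)
  rcases le_or_gt j p.natDegree with hj | hj
  · exact hle j hj
  · rw [coeff_eq_zero_of_natDegree_lt (by rwa [natDegree_taylor]), norm_zero]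
    exact (norm_nonneg _).trans (hle 0 (Nat.zero_le _))

lemma norm_uPar_le_Amax_sq (m : ℕ) : ‖uPar p m z‖ ≤ Amax p z ^ 2 := by
  rw [uPar_eq_taylor_coeff_mul, norm_mul, RCLike.norm_conj, sq]
  exact mul_le_mul (norm_taylor_coeff_le_Amax p z 0) (norm_taylor_coeff_le_Amax p z m)
    (norm_nonneg _) ((norm_nonneg _).trans (norm_taylor_coeff_le_Amax p z 0))

variable {p z}

lemma kIndex_spec (hp : 0 < p.natDegree) (z : ℂ) :
    1 ≤ kIndex p z ∧ dEval p (kIndex p z) z ≠ 0 := by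
  refine Nat.sInf_mem (s := {j | 1 ≤ j ∧ dEval p j z ≠ 0}) ⟨p.natDegree, hp, ?_⟩
  rw [Ne, dEval_eq_zero_iff, coeff_taylor_natDegree, leadingCoeff_eq_zero]
  exact ne_zero_of_natDegree_gt hp

lemma dEval_eq_zero_of_lt_kIndex {j : ℕ} (hj : 0 < j) (hjk : j < kIndex p z) :
    dEval p j z = 0 := by
  by_contra h
  exact Nat.notMem_of_lt_sInf hjk ⟨hj, h⟩

lemma uPar_kIndex_ne_zero (hp : 0 < p.natDegree) (hz : p.eval z ≠ 0) :
    uPar p (kIndex p z) z ≠ 0 := by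
  simp [uPar, hz, (kIndex_spec hp z).2, Nat.factorial_ne_zero]

end TaylorCoefficients

section StepParameters

variable {p : ℂ[X]} {m : ℕ} {z : ℂ}

lemma Amax_pos (hu : uPar p m z ≠ 0) : 0 < Amax p z := by
  refine ((norm_nonneg _).trans (norm_taylor_coeff_le_Amax p z 0)).lt_of_ne' fun hA => hu ?_
  simpa [hA] using norm_uPar_le_Amax_sq p z m

lemma cPar_pos (hu : uPar p m z ≠ 0) : 0 < cPar p m z := by
  rw [cPar, lt_max_iff, abs_pos, abs_pos]
  contrapose! hu
  refine eq_zero_of_pow_eq_zero (n := m - 1) (Complex.ext ?_ ?_)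
  · simpa [gammaPar] using hu.1
  · simpa [deltaPar] using hu.2

lemma cPar_le : cPar p m z ≤ 2 * ‖uPar p m z‖ ^ (m - 1) := by
  rw [cPar, gammaPar, deltaPar, abs_mul, abs_mul, abs_neg, abs_two, ← norm_pow]
  exact max_le (mul_le_mul_of_nonneg_left (Complex.abs_re_le_norm _) zero_le_two)
    (mul_le_mul_of_nonneg_left (Complex.abs_im_le_norm _) zero_le_two)

lemma exp_thetaPar_mul_I_pow (hm : m ≠ 0) :
    Complex.exp (thetaPar p m z * Complex.I) ^ m =
      if cPar p m z = |gammaPar p m z| then (if gammaPar p m z < 0 then 1 else -1)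
      else (if deltaPar p m z < 0 then Complex.I else -Complex.I) := by
  have hm' : (m : ℂ) ≠ 0 := Nat.cast_ne_zero.2 hm
  rw [← Complex.exp_nat_mul, thetaPar]
  split_ifs
  · simp
  · rw [← Complex.exp_pi_mul_I]
    push_cast
    field_simp
  · have hhalf : (m : ℂ) * (((Real.pi / (2 * m) : ℝ) : ℂ) * Complex.I)
        = Real.pi / 2 * Complex.I := by
      push_cast
      field_simp
    rw [hhalf, Complex.exp_pi_div_two_mul_I]
  · have hthree : (m : ℂ) * (((3 * Real.pi / (2 * m) : ℝ) : ℂ) * Complex.I)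
        = Real.pi * Complex.I + Real.pi / 2 * Complex.I := by
      push_cast
      field_simp
      norm_num
    rw [hthree, Complex.exp_add, Complex.exp_pi_mul_I, Complex.exp_pi_div_two_mul_I, neg_one_mul]

lemma two_mul_re_uPar_pow_mul_exp_thetaPar (hm : m ≠ 0) :
    2 * (uPar p m z ^ (m - 1) * Complex.exp (thetaPar p m z * Complex.I) ^ m).re
      = -cPar p m z := by
  rw [exp_thetaPar_mul_I_pow hm]
  split_ifs with hc hγ hδ
  · rw [hc, abs_of_neg hγ]
    simp [gammaPar]
  · rw [hc, abs_of_nonneg (not_lt.1 hγ)]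
    simp [gammaPar]
  · have hcδ : cPar p m z = |deltaPar p m z| := (max_choice _ _).resolve_left hc
    rw [hcδ, abs_of_neg hδ]
    simp [deltaPar]
  · have hcδ : cPar p m z = |deltaPar p m z| := (max_choice _ _).resolve_left hc
    rw [hcδ, abs_of_nonneg (not_lt.1 hδ)]
    simp [deltaPar]

lemma CPar_pos (hu : uPar p m z ≠ 0) : 0 < CPar p m z :=
  have hA := Amax_pos hu
  div_pos (mul_pos (cPar_pos hu) (zpow_pos (norm_pos_iff.2 hu) _)) (by positivity)

lemma CPar_le_one_third (hm : 1 ≤ m) (hu : uPar p m z ≠ 0) : CPar p m z ≤ 1 / 3 := by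
  have hu' := norm_pos_iff.2 hu
  have hA := Amax_pos hu
  rw [CPar, div_le_iff₀ (by positivity)]
  calc cPar p m z * ‖uPar p m z‖ ^ ((2 : ℤ) - m)
      ≤ 2 * ‖uPar p m z‖ ^ (m - 1) * ‖uPar p m z‖ ^ ((2 : ℤ) - m) := by
        gcongr
        exact cPar_le
    _ = 2 * ‖uPar p m z‖ := by
        rw [mul_assoc, ← zpow_natCast, ← zpow_add₀ hu'.ne', Nat.cast_sub hm]
        simp
    _ ≤ 2 * Amax p z ^ 2 := by
        gcongr
        exact norm_uPar_le_Amax_sq p z m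
    _ = 1 / 3 * (6 * Amax p z ^ 2) := by ring

end StepParameters

section Displacement

/-- The displacement `N̂_p(z) - z = (C_m/3) · (u_m/|u_m|) · e^(iθ)` of the Robust Newton step with
prescribed index `m`, shaped so that `RN_eq_add_rniDisplacement` holds by `rfl`. -/
def rniDisplacement (p : ℂ[X]) (m : ℕ) (z : ℂ) : ℂ :=
  ((CPar p m z / 3 : ℝ) : ℂ) * (uPar p m z / (‖uPar p m z‖ : ℂ)) *
    Complex.exp (thetaPar p m z * Complex.I)

lemma RN_eq_add_rniDisplacement (p : ℂ[X]) (z : ℂ) :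
    RN p z = z + rniDisplacement p (kIndex p z) z :=
  rfl

lemma conj_mul_div_norm_mul_pow {𝕜 : Type*} [RCLike 𝕜] {u : 𝕜} (hu : u ≠ 0) {m : ℕ} (hm : m ≠ 0)
    (e : 𝕜) :
    (starRingEnd 𝕜) u * (u / (‖u‖ : 𝕜) * e) ^ m
      = ((‖u‖ ^ ((2 : ℤ) - m) : ℝ) : 𝕜) * (u ^ (m - 1) * e ^ m) := by
  have hu' : (‖u‖ : 𝕜) ≠ 0 := by simpa using hu
  obtain ⟨m, rfl⟩ := Nat.exists_eq_succ_of_ne_zero hm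
  rw [RCLike.ofReal_zpow, zpow_sub₀ hu', zpow_natCast, zpow_ofNat, ← RCLike.conj_mul,
    Nat.succ_sub_one, mul_pow, div_pow, pow_succ u]
  ring

variable {p : ℂ[X]} {m : ℕ} {z : ℂ}

lemma norm_rniDisplacement (hu : uPar p m z ≠ 0) :
    ‖rniDisplacement p m z‖ = CPar p m z / 3 := by
  simp [rniDisplacement, Complex.norm_exp_ofReal_mul_I, hu, abs_of_pos (CPar_pos hu)]

lemma two_mul_re_conj_uPar_mul_rniDisplacement_pow (hm : m ≠ 0) (hu : uPar p m z ≠ 0) :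
    2 * ((starRingEnd ℂ) (uPar p m z) * rniDisplacement p m z ^ m).re
      = -(18 * Amax p z ^ 2 * ‖rniDisplacement p m z‖ ^ (m + 1)) := by
  have hA := Amax_pos hu
  rw [norm_rniDisplacement hu]
  set r := CPar p m z / 3 with hr
  set u := uPar p m z
  set e := Complex.exp (thetaPar p m z * Complex.I)
  have hC : 18 * Amax p z ^ 2 * r = cPar p m z * ‖u‖ ^ ((2 : ℤ) - m) := by
    rw [hr, CPar]
    field_simp
    ring
  have hunit : (starRingEnd ℂ) u * (u / (‖u‖ : ℂ) * e) ^ m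
      = ((‖u‖ ^ ((2 : ℤ) - m) : ℝ) : ℂ) * (u ^ (m - 1) * e ^ m) :=
    conj_mul_div_norm_mul_pow hu hm e
  have hpow : (starRingEnd ℂ) u * rniDisplacement p m z ^ m
      = ((r ^ m * ‖u‖ ^ ((2 : ℤ) - m) : ℝ) : ℂ) * (u ^ (m - 1) * e ^ m) := by
    change (starRingEnd ℂ) u * ((r : ℂ) * (u / (‖u‖ : ℂ)) * e) ^ m = _
    rw [mul_assoc (r : ℂ), mul_pow, mul_left_comm, hunit]
    push_cast
    ring
  have hdir : 2 * (u ^ (m - 1) * e ^ m).re = -cPar p m z := two_mul_re_uPar_pow_mul_exp_thetaPar hm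
  rw [hpow, Complex.re_ofReal_mul]
  linear_combination r ^ m * ‖u‖ ^ ((2 : ℤ) - m) * hdir + r ^ m * hC

end Displacement

section Descent

variable {p : ℂ[X]} {z : ℂ}

lemma norm_eval_add_sq_le (hp : 0 < p.natDegree) (z : ℂ) {w : ℂ} (hw : ‖w‖ < 1) :
    ‖p.eval (z + w)‖ ^ 2 ≤ ‖p.eval z‖ ^ 2
      + 2 * ((starRingEnd ℂ) (uPar p (kIndex p z) z) * w ^ kIndex p z).re
      + 3 * Amax p z ^ 2 * ‖w‖ ^ (kIndex p z + 1) / (1 - ‖w‖) ^ 2 := by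
  have hgap : ∀ j, 0 < j → j < kIndex p z → (taylor z p).coeff j = 0 := fun j hj hjk =>
    (dEval_eq_zero_iff p z j).1 (dEval_eq_zero_of_lt_kIndex hj hjk)
  have hexp := norm_eval_sq_le_of_gap (kIndex_spec hp z).1 hgap (norm_taylor_coeff_le_Amax p z) hw
  rwa [← mul_assoc, ← RCLike.conj_conj ((taylor z p).coeff (kIndex p z)), ← map_mul,
    ← uPar_eq_taylor_coeff_mul, taylor_coeff_zero, taylor_eval, add_comm w z] at hexp

theorem norm_eval_RN_lt (hp : 0 < p.natDegree) (hz : p.eval z ≠ 0) :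
    ‖p.eval (RN p z)‖ < ‖p.eval z‖ := by
  set k := kIndex p z
  set w := rniDisplacement p k z
  have hk : 1 ≤ k := (kIndex_spec hp z).1
  have hu : uPar p k z ≠ 0 := uPar_kIndex_ne_zero hp hz
  have hA : 0 < Amax p z := Amax_pos hu
  have hnorm : ‖w‖ = CPar p k z / 3 := norm_rniDisplacement hu
  have hw_pos : 0 < ‖w‖ := by linarith [CPar_pos hu]
  have hw_le : ‖w‖ ≤ 1 / 9 := by linarith [CPar_le_one_third hk hu]
  have hmain : 2 * ((starRingEnd ℂ) (uPar p k z) * w ^ k).re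
      = -(18 * Amax p z ^ 2 * ‖w‖ ^ (k + 1)) :=
    two_mul_re_conj_uPar_mul_rniDisplacement_pow (by lia) hu
  have herror : 3 * Amax p z ^ 2 * ‖w‖ ^ (k + 1) / (1 - ‖w‖) ^ 2
      < 18 * Amax p z ^ 2 * ‖w‖ ^ (k + 1) := by
    have hden : 1 / 6 < (1 - ‖w‖) ^ 2 := by nlinarith
    have hB : 0 < Amax p z ^ 2 * ‖w‖ ^ (k + 1) := by positivity
    rw [div_lt_iff₀ (by linarith)]
    nlinarith
  have hexp := norm_eval_add_sq_le (w := w) hp z (by linarith)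
  rw [RN_eq_add_rniDisplacement]
  exact lt_of_pow_lt_pow_left₀ 2 (norm_nonneg _) (by linarith)

lemma norm_eval_rnmOrbit_succ_lt (hp : 0 < p.natDegree) (z₀ : ℂ) (t : ℕ)
    (ht : p.eval (rnmOrbit p z₀ t) ≠ 0) :
    ‖p.eval (rnmOrbit p z₀ (t + 1))‖ < ‖p.eval (rnmOrbit p z₀ t)‖ := by
  rw [rnmOrbit, if_neg ht]
  exact norm_eval_RN_lt hp ht

lemma antitone_norm_eval_rnmOrbit (hp : 0 < p.natDegree) (z₀ : ℂ) :
    Antitone fun t => ‖p.eval (rnmOrbit p z₀ t)‖ := by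
  refine antitone_nat_of_succ_le fun t => ?_
  by_cases ht : p.eval (rnmOrbit p z₀ t) = 0
  · rw [rnmOrbit, if_pos ht]
  · exact (norm_eval_rnmOrbit_succ_lt hp z₀ t ht).le

end Descent

/-- The RNM orbit of a seed `z₀` remains in `S₀ = {z : |p(z)| ≤ |p(z₀)|}`; in fact
`|p(z_{t+1})| ≤ |p(z_t)|` for every `t ≥ 0`, with strict inequality whenever `p(z_t) ≠ 0`. -/
theorem rnm_orbit_monotone (p : Polynomial ℂ) (hdeg : 2 ≤ p.natDegree) (z₀ : ℂ) :
    (∀ t : ℕ, rnmOrbit p z₀ t ∈ {z : ℂ | ‖p.eval z‖ ≤ ‖p.eval z₀‖}) ∧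
    (∀ t : ℕ, ‖p.eval (rnmOrbit p z₀ (t + 1))‖ ≤
        ‖p.eval (rnmOrbit p z₀ t)‖) ∧
    (∀ t : ℕ, p.eval (rnmOrbit p z₀ t) ≠ 0 →
        ‖p.eval (rnmOrbit p z₀ (t + 1))‖ <
          ‖p.eval (rnmOrbit p z₀ t)‖) := by
  have hp : 0 < p.natDegree := by lia
  have hanti := antitone_norm_eval_rnmOrbit hp z₀
  exact ⟨fun t => hanti (Nat.zero_le t), fun t => hanti t.le_succ,
    norm_eval_rnmOrbit_succ_lt hp z₀⟩
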